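/- Let C be a nonempty convex subset of ℝⁿ, f : ℝⁿ × ℝⁿ → ℝ, and x̄ ∈ C with f(x̄, x̄) = 0. Assume the function y ↦ f(x̄, y) is strongly quasiconvex on C with modulus γ > 0, and that x̄ is a ρ̄-quasi-solution for some ρ̄ > 0, i.e., f(x̄, y) + (1/(2ρ̄))‖y − x̄‖² ≥ 0 for all y ∈ C. Then x̄ is a solution of the equilibrium problem: f(x̄, y) ≥ 0 for all y ∈ C. -/

import Mathlib

open Filter Topology

/-- `φ` is strongly quasiconvex on `C` with modulus `γ > 0`. -/
def StronglyQuasiconvexOn {n : ℕ} (C : Set (EuclideanSpace ℝ (Fin n))) (γ : ℝ)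
    (φ : EuclideanSpace ℝ (Fin n) → ℝ) : Prop :=
  ∀ u ∈ C, ∀ v ∈ C, ∀ l : ℝ, l ∈ Set.Icc (0 : ℝ) 1 →
    φ (l • u + (1 - l) • v) ≤ max (φ u) (φ v) - l * (1 - l) * (γ / 2) * ‖u - v‖ ^ 2

/-!
Write `φ = f xbar`. Along the segment from `xbar` towards a point `y ≠ xbar` with `φ y ≤ φ xbar`,
strong quasiconvexity forces `φ` to drop below `φ xbar` at least linearly in the step length,
whereas at a quasi-solution it can drop at most quadratically. Short steps therefore rule out such
a `y`.
-/

theorem tendsto_smul_add_one_sub_smul_nhdsWithin {E : Type*} [AddCommGroup E] [Module ℝ E]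
    [TopologicalSpace E] [ContinuousAdd E] [ContinuousSMul ℝ E] {C : Set E} {x y : E}
    (hC : Convex ℝ C) (hx : x ∈ C) (hy : y ∈ C) :
    Tendsto (fun t : ℝ ↦ t • y + (1 - t) • x) (𝓝[>] 0) (𝓝[C] x) := by
  refine tendsto_nhdsWithin_iff.mpr ⟨?_, ?_⟩
  · have hcont : Continuous fun t : ℝ ↦ t • y + (1 - t) • x := by fun_prop
    simpa using (hcont.tendsto 0).mono_left nhdsWithin_le_nhds
  · filter_upwards [Ioo_mem_nhdsGT one_pos] with t ht
    exact hC hy hx ht.1.le (sub_nonneg.mpr ht.2.le) (add_sub_cancel t 1)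

section

variable {E : Type*} [NormedAddCommGroup E] {C : Set E} {φ : E → ℝ} {x y : E}

/-- Fréchet stationarity of `φ` at `x` relative to `C`: zero is a Fréchet subgradient at `x` of the
restriction of `φ` to `C`. It is the first-order, local weakening of the quasi-solution property. -/
def IsFrechetStationaryOn (φ : E → ℝ) (C : Set E) (x : E) : Prop :=
  ∀ ε > 0, ∀ᶠ z in 𝓝[C] x, φ x ≤ φ z + ε * ‖z - x‖

theorem isFrechetStationaryOn_of_le_add_mul_sq {c : ℝ}
    (h : ∀ z ∈ C, φ x ≤ φ z + c * ‖z - x‖ ^ 2) : IsFrechetStationaryOn φ C x := by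
  intro ε hε
  have hlim : Tendsto (fun z ↦ c * ‖z - x‖) (𝓝[C] x) (𝓝 0) := by
    have hcont : Continuous fun z ↦ c * ‖z - x‖ := by fun_prop
    simpa using (hcont.tendsto x).mono_left nhdsWithin_le_nhds
  filter_upwards [self_mem_nhdsWithin, hlim.eventually_le_const hε] with z hz hcz
  calc φ x ≤ φ z + c * ‖z - x‖ * ‖z - x‖ := by simpa only [pow_two, mul_assoc] using h z hz
    _ ≤ φ z + ε * ‖z - x‖ := by gcongr

variable [NormedSpace ℝ E] {ω : ℝ → ℝ}

theorem IsFrechetStationaryOn.eventually_le_add_mul_segment (h : IsFrechetStationaryOn φ C x)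
    (hC : Convex ℝ C) (hx : x ∈ C) (hy : y ∈ C) {ε : ℝ} (hε : 0 < ε) :
    ∀ᶠ t : ℝ in 𝓝[>] 0, φ x ≤ φ (t • y + (1 - t) • x) + t * (ε * ‖y - x‖) := by
  filter_upwards [(tendsto_smul_add_one_sub_smul_nhdsWithin hC hx hy).eventually (h ε hε),
    self_mem_nhdsWithin] with t ht ht_pos
  have hstep : t • y + (1 - t) • x - x = t • (y - x) := by module
  rwa [hstep, norm_smul, Real.norm_of_nonneg (le_of_lt ht_pos), mul_left_comm] at ht

/-- Uniform quasiconvexity with modulus `ω`, the quasiconvex analogue of `UniformConvexOn`; strong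
quasiconvexity with modulus `γ` is the case `ω r = γ / 2 * r ^ 2`. As in `UniformConvexOn`,
convexity of the set is part of the notion. -/
def UniformQuasiconvexOn (C : Set E) (ω : ℝ → ℝ) (φ : E → ℝ) : Prop :=
  Convex ℝ C ∧ ∀ ⦃u⦄, u ∈ C → ∀ ⦃v⦄, v ∈ C → ∀ ⦃a b : ℝ⦄, 0 ≤ a → 0 ≤ b → a + b = 1 →
    φ (a • u + b • v) ≤ max (φ u) (φ v) - a * b * ω ‖u - v‖

theorem UniformQuasiconvexOn.modulus_nonpos_of_isFrechetStationaryOn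
    (hφ : UniformQuasiconvexOn C ω φ) (h : IsFrechetStationaryOn φ C x)
    (hx : x ∈ C) (hy : y ∈ C) (hyx : φ y ≤ φ x) : ω ‖y - x‖ ≤ 0 := by
  have hslope : ∀ ε > 0, ω ‖y - x‖ ≤ ε * ‖y - x‖ := by
    intro ε hε
    have hlim : Tendsto (fun t : ℝ ↦ (1 - t) * ω ‖y - x‖) (𝓝[>] 0) (𝓝 (ω ‖y - x‖)) := by
      have hcont : Continuous fun t : ℝ ↦ (1 - t) * ω ‖y - x‖ := by fun_prop
      simpa using (hcont.tendsto 0).mono_left nhdsWithin_le_nhds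
    refine le_of_tendsto hlim ?_
    filter_upwards [h.eventually_le_add_mul_segment hφ.1 hx hy hε, Ioo_mem_nhdsGT one_pos]
      with t hlower ⟨ht_pos, ht_lt_one⟩
    have hupper := hφ.2 hy hx ht_pos.le (sub_nonneg.mpr ht_lt_one.le) (add_sub_cancel t 1)
    rw [max_eq_right hyx, mul_assoc] at hupper
    exact le_of_mul_le_mul_left (by linarith) ht_pos
  have hlim : Tendsto (fun ε : ℝ ↦ ε * ‖y - x‖) (𝓝[>] 0) (𝓝 0) := by
    simpa using ((continuous_mul_const ‖y - x‖).tendsto 0).mono_left nhdsWithin_le_nhds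
  exact ge_of_tendsto hlim (eventually_mem_nhdsWithin.mono hslope)

theorem UniformQuasiconvexOn.lt_of_isFrechetStationaryOn
    (hφ : UniformQuasiconvexOn C ω φ) (hω : ∀ r > 0, 0 < ω r) (h : IsFrechetStationaryOn φ C x)
    (hx : x ∈ C) (hy : y ∈ C) (hne : y ≠ x) : φ x < φ y := by
  by_contra! hyx
  exact (hω _ (norm_sub_pos_iff.mpr hne)).not_ge
    (hφ.modulus_nonpos_of_isFrechetStationaryOn h hx hy hyx)

theorem quasi_solution_is_solution_of_strongly_quasiconvex_general {f : E → E → ℝ}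
    (hdiag : 0 ≤ f x x) (hsq : UniformQuasiconvexOn C ω (f x)) (hω : ∀ r > 0, 0 < ω r)
    (hx : x ∈ C) (h : IsFrechetStationaryOn (f x) C x) : ∀ y ∈ C, 0 ≤ f x y := by
  intro y hy
  obtain rfl | hne := eq_or_ne y x
  · exact hdiag
  · exact hdiag.trans (hsq.lt_of_isFrechetStationaryOn hω h hx hy hne).le

end

theorem StronglyQuasiconvexOn.uniformQuasiconvexOn {n : ℕ} {C : Set (EuclideanSpace ℝ (Fin n))}
    {γ : ℝ} {φ : EuclideanSpace ℝ (Fin n) → ℝ} (hφ : StronglyQuasiconvexOn C γ φ)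
    (hC : Convex ℝ C) : UniformQuasiconvexOn C (fun r ↦ γ / 2 * r ^ 2) φ := by
  refine ⟨hC, fun u hu v hv a b ha hb hab ↦ ?_⟩
  obtain rfl : b = 1 - a := eq_sub_of_add_eq' hab
  simpa only [mul_assoc] using hφ u hu v hv a ⟨ha, sub_nonneg.mp hb⟩

theorem quasi_solution_is_solution_of_strongly_quasiconvex {n : ℕ}
    (C : Set (EuclideanSpace ℝ (Fin n)))
    (hCne : C.Nonempty) (hCcv : Convex ℝ C)
    (f : EuclideanSpace ℝ (Fin n) → EuclideanSpace ℝ (Fin n) → ℝ)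
    (xbar : EuclideanSpace ℝ (Fin n)) (hxbar : xbar ∈ C)
    (hdiag : f xbar xbar = 0)
    (γ : ℝ) (hγ : 0 < γ)
    (hsq : StronglyQuasiconvexOn C γ (f xbar))
    (ρbar : ℝ) (hρbar : 0 < ρbar)
    (hquasi : ∀ y ∈ C, 0 ≤ f xbar y + (1 / (2 * ρbar)) * ‖y - xbar‖ ^ 2) :
    ∀ y ∈ C, 0 ≤ f xbar y :=
  quasi_solution_is_solution_of_strongly_quasiconvex_general hdiag.ge
    (hsq.uniformQuasiconvexOn hCcv) (fun r hr ↦ by positivity) hxbar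
    (isFrechetStationaryOn_of_le_add_mul_sq fun y hy ↦ hdiag ▸ hquasi y hy)
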